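/- Let k be an algebraically closed field of characteristic zero, G a finite abelian group, and Ĝ the group of characters G → kˣ. Let g ∈ G have order n ≥ 2 and let χ ∈ Ĝ be such that q := χ(g) has order n. Let F be a field extension of k, let ψ : Ĝ × Ĝ → Fˣ satisfy the 2-cocycle identity ψ(α,β)·ψ(αβ,γ) = ψ(β,γ)·ψ(α,βγ) for all α, β, γ ∈ Ĝ, and let c : Ĝ → F satisfy: c(α) = 0 whenever α(g) = 1, and α(g)·ψ(α,βχ)·c(β) + ψ(αχ,β)·c(α) = ψ(α,β)·c(αβ) for all α, β ∈ Ĝ. Then for every α ∈ Ĝ one has c(α)·ψ(χ,χ)·(1 − q) = c(χ)·(1 − α(g))·ψ(χ,α). -/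

import Mathlib

/-!
Put `d β = c β / ψ(χ, β)`. The cocycle identity at `(χ, χ, β)` turns the recursion at `(χ, β)` into
the affine recursion `d (χβ) = q · d β + d χ`, so `d (χ ^ i γ) = (1 + q + ⋯ + q ^ (i - 1)) · d χ`
whenever `d γ = 0`. As `q = χ(g)` generates the `n`-th roots of unity, every character is of the
form `χ ^ i γ` with `γ(g) = 1`.
-/

theorem apply_pow_mul_of_affine_recursion {M R : Type*} [Monoid M] [Semiring R]
    {d : M → R} {x : M} {q b : R} (hd : ∀ y, d (x * y) = q * d y + b) (i : ℕ) (y : M) :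
    d (x ^ i * y) = q ^ i * d y + (∑ j ∈ Finset.range i, q ^ j) * b := by
  induction i with
  | zero => simp
  | succ i ih =>
    simp only [pow_succ', mul_assoc, hd, ih, geom_sum_succ, mul_add, add_mul, one_mul, add_assoc]

section CocycleRecursion

variable {A F : Type*} [CommMonoid A] [CommRing F] {ψ : A → A → Fˣ} {e c : A → F} {χ : A}

theorem divp_cocycle_recursion
    (hcocycle : ∀ α β γ, ψ α β * ψ (α * β) γ = ψ β γ * ψ α (β * γ))
    (hrec : ∀ α β, e α * ψ α (β * χ) * c β + ψ (α * χ) β * c α = ψ α β * c (α * β)) (β : A) :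
    c (χ * β) /ₚ ψ χ (χ * β) = e χ * (c β /ₚ ψ χ β) + c χ /ₚ ψ χ χ := by
  have hψ : (ψ χ χ * ψ (χ * χ) β : F) = ψ χ β * ψ χ (χ * β) :=
    mod_cast congrArg Units.val (hcocycle χ χ β)
  have hc := hrec χ β
  rw [mul_comm β χ] at hc
  rw [← divp_assoc, Units.divp_add_divp, divp_eq_divp_iff, Units.val_mul]
  linear_combination -(ψ χ χ : F) * hc + c χ * hψ

theorem cocycle_recursion_apply_pow_mul
    (hcocycle : ∀ α β γ, ψ α β * ψ (α * β) γ = ψ β γ * ψ α (β * γ))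
    (hrec : ∀ α β, e α * ψ α (β * χ) * c β + ψ (α * χ) β * c α = ψ α β * c (α * β))
    {γ : A} (hγ : c γ = 0) (i : ℕ) :
    c (χ ^ i * γ) * ψ χ χ * (1 - e χ) = c χ * (1 - e χ ^ i) * ψ χ (χ ^ i * γ) := by
  have hsum : c (χ ^ i * γ) /ₚ ψ χ (χ ^ i * γ) =
      (∑ j ∈ Finset.range i, e χ ^ j) * c χ /ₚ ψ χ χ := by
    rw [apply_pow_mul_of_affine_recursion (d := fun β ↦ c β /ₚ ψ χ β)
      (divp_cocycle_recursion hcocycle hrec), hγ, divp, zero_mul, mul_zero, zero_add, divp_assoc]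
  rw [divp_eq_divp_iff] at hsum
  rw [hsum, ← mul_neg_geom_sum]
  ring

end CocycleRecursion

theorem exists_apply_eq_one_and_eq_pow_mul {G R : Type*} [Monoid G] [CommRing R] [IsDomain R]
    {g : G} (hg : IsOfFinOrder g) {χ : G →* Rˣ} (hχ : orderOf (χ g) = orderOf g) (α : G →* Rˣ) :
    ∃ (i : ℕ) (γ : G →* Rˣ), γ g = 1 ∧ α = χ ^ i * γ := by
  have : NeZero (orderOf g) := ⟨hg.orderOf_pos.ne'⟩
  have hprim : IsPrimitiveRoot (χ g) (orderOf g) := hχ ▸ IsPrimitiveRoot.orderOf (χ g)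
  have hroot : α g ∈ rootsOfUnity (orderOf g) R := by
    rw [mem_rootsOfUnity, ← map_pow, pow_orderOf_eq_one, map_one]
  obtain ⟨i, -, hi⟩ := hprim.eq_pow_of_mem_rootsOfUnity hroot
  refine ⟨i, (χ ^ i)⁻¹ * α, ?_, (mul_inv_cancel_left (χ ^ i) α).symm⟩
  rw [MonoidHom.mul_apply, MonoidHom.inv_apply, MonoidHom.pow_apply, hi, inv_mul_cancel]

theorem stmt_6_general {k G F : Type*} [CommRing k] [IsDomain k] [Monoid G] [CommRing F]
    [Algebra k F] {g : G} (hg : IsOfFinOrder g) {χ : G →* kˣ} (hχ : orderOf (χ g) = orderOf g)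
    {ψ : (G →* kˣ) → (G →* kˣ) → Fˣ}
    (hcocycle : ∀ α β γ, ψ α β * ψ (α * β) γ = ψ β γ * ψ α (β * γ))
    {c : (G →* kˣ) → F} (hc0 : ∀ α : G →* kˣ, α g = 1 → c α = 0)
    (hrec : ∀ α β : G →* kˣ, algebraMap k F (α g) * ψ α (β * χ) * c β + ψ (α * χ) β * c α =
      ψ α β * c (α * β))
    (α : G →* kˣ) :
    c α * ψ χ χ * (1 - algebraMap k F (χ g)) = c χ * (1 - algebraMap k F (α g)) * ψ χ α := by
  obtain ⟨i, γ, hγ, rfl⟩ := exists_apply_eq_one_and_eq_pow_mul hg hχ α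
  have hval : algebraMap k F ((χ ^ i * γ) g) = algebraMap k F (χ g) ^ i := by
    rw [MonoidHom.mul_apply, MonoidHom.pow_apply, hγ, mul_one, Units.val_pow_eq_pow_val, map_pow]
  rw [hval]
  exact cocycle_recursion_apply_pow_mul (e := fun α ↦ algebraMap k F (α g)) hcocycle hrec
    (hc0 γ hγ) i

/-- The main recursion computation in the proof of Theorem 3.3: the structure
constants `c(α)` with the stated vanishing and recursion satisfy
`c(α)·ψ(χ,χ)·(1−q) = c(χ)·(1−α(g))·ψ(χ,α)` for all characters `α`. -/
theorem stmt_6 (k : Type*) [Field k] [IsAlgClosed k] [CharZero k]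
    (G : Type*) [CommGroup G] [Fintype G]
    (g : G) (n : ℕ) (hn : 2 ≤ n) (hg : orderOf g = n)
    (χ : G →* kˣ) (hq : orderOf (χ g) = n)
    (F : Type*) [Field F] [Algebra k F]
    (ψ : (G →* kˣ) → (G →* kˣ) → Fˣ)
    (hcocycle : ∀ α β γ : G →* kˣ,
      ψ α β * ψ (α * β) γ = ψ β γ * ψ α (β * γ))
    (c : (G →* kˣ) → F)
    (hc0 : ∀ α : G →* kˣ, α g = 1 → c α = 0)
    (hrec : ∀ α β : G →* kˣ,
      algebraMap k F ((α g : kˣ) : k) * ((ψ α (β * χ) : Fˣ) : F) * c β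
        + ((ψ (α * χ) β : Fˣ) : F) * c α
        = ((ψ α β : Fˣ) : F) * c (α * β)) :
    ∀ α : G →* kˣ,
      c α * ((ψ χ χ : Fˣ) : F) * (1 - algebraMap k F ((χ g : kˣ) : k)) =
      c χ * (1 - algebraMap k F ((α g : kˣ) : k)) * ((ψ χ α : Fˣ) : F) := by
  exact stmt_6_general (orderOf_pos_iff.mp (by omega)) (hq.trans hg.symm) hcocycle hc0 hrec
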